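/- In the Wilson–Xiang setting, X_{1,c} = {(q+1)/2·ε, (q+1)/2·δ − c (mod 2(q+1))} for some pair (ε,δ) with (ε,δ) ∈ {(1,1), (−1,−1)} if q ≡ 3 (mod 4), and (ε,δ) ∈ {(−1,1), (1,−1)} if q ≡ 1 (mod 4). -/

import Mathlib

noncomputable section

def IsPrim (L : Type) [Field L] (ω : L) : Prop :=
  ∀ x : L, x ≠ 0 → ∃ n : ℕ, x = ω ^ n

/-- nonzero squares of `K` -/
def sqSet (K : Type) [Field K] : Set K := {y | ∃ z : K, z ≠ 0 ∧ y = z ^ 2}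

theorem wx_card_units {L : Type} [Field L] [Fintype L] {q : ℕ} (hL : Fintype.card L = q ^ 2)
    (u : Lˣ) (hu : IsPrim L (u : L)) : orderOf u = q ^ 2 - 1 := by
  classical
  have h : ∀ x : Lˣ, x ∈ Subgroup.zpowers u := by
    intro x
    obtain ⟨n, hn⟩ := hu x x.ne_zero
    exact ⟨n, by ext; simp [hn]⟩
  rw [orderOf_eq_card_of_forall_mem_zpowers h, Nat.card_eq_fintype_card, Fintype.card_units, hL]

theorem wx_neg_one {L : Type} [Field L] [Fintype L] {q : ℕ} (hL : Fintype.card L = q ^ 2)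
    (hq1 : 1 < q) (h : ℕ) (hh : 2 * h = q + 1)
    (u : Lˣ) (hu : IsPrim L (u : L)) : u ^ (h * (q - 1)) = -1 ∧ u ^ (h * (q - 1)) ≠ 1 := by
  have ho := wx_card_units hL u hu
  obtain ⟨r, rfl⟩ : ∃ r, q = r + 1 := ⟨q - 1, by omega⟩
  have e : (r + 1) ^ 2 - 1 = h * r * 2 := by
    have : (r + 1) ^ 2 = h * r * 2 + 1 := by nlinarith
    omega
  rw [e] at ho
  simp only [Nat.add_sub_cancel]
  have h1 : u ^ (h * r * 2) = 1 := by
    rw [← ho]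
    exact pow_orderOf_eq_one u
  have hne : u ^ (h * r) ≠ 1 := by
    intro h2
    have := Nat.le_of_dvd (Nat.mul_pos (by omega) (by omega)) (orderOf_dvd_of_pow_eq_one h2)
    rw [ho] at this
    have : 0 < h * r := Nat.mul_pos (by omega) (by omega)
    omega
  refine ⟨?_, hne⟩
  have h2 : ((u ^ (h * r) : Lˣ) : L) ^ 2 = 1 := by
    rw [← Units.val_pow_eq_pow_val, ← pow_mul, h1, Units.val_one]
  rcases (sq_eq_one_iff (a := ((u ^ (h * r) : Lˣ) : L))).1 h2 with h3 | h3
  · exact absurd (Units.ext h3) hne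
  · exact Units.ext h3

theorem wx_trace {K L : Type} [Field K] [Fintype K] [Field L] [Fintype L] [Algebra K L] {q : ℕ}
    (hK : Fintype.card K = q) (hL : Fintype.card L = q ^ 2) (x : L) :
    algebraMap K L (Algebra.trace K L x) = x + x ^ q ∧
    algebraMap K L (Algebra.norm K x) = x * x ^ q := by
  have hf : Module.finrank K L = 2 := by
    have := Module.card_eq_pow_finrank (K := K) (V := L)
    rw [hK, hL] at this
    refine (Nat.pow_right_injective ?_ this).symm
    rw [← hK]; exact Fintype.one_lt_card
  rw [FiniteField.algebraMap_trace_eq_sum_pow, FiniteField.algebraMap_norm_eq_prod_pow, hf]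
  simp [Finset.sum_range_succ, Finset.prod_range_succ, hK]

theorem wx_key {K L : Type} [Field K] [Fintype K] [Field L] [Fintype L] [Algebra K L] {q : ℕ}
    (hK : Fintype.card K = q) (hL : Fintype.card L = q ^ 2) (hq1 : 1 < q)
    (h : ℕ) (hh : 2 * h = q + 1) (u : Lˣ) (hu : IsPrim L (u : L)) (c : ℕ) (hc : Odd c) :
    ∃ S : ℤ → ℤ, (∀ n, S (n + (q + 1)) = - S n) ∧
      (∀ n, S n = 0 ↔ ((q + 1 : ℕ) : ℤ) ∣ n - h) ∧
      (∀ n, S n = 0 ∨ S n = 1 ∨ S n = -1) ∧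
      (q % 4 = 3 → S (h - c) = S (h + c)) ∧
      (q % 4 = 1 → S (h - c) = - S (h + c)) ∧
      (∀ n : ℕ, S n = 0 ↔ Algebra.trace K L ((u : L) ^ n) = 0) ∧
      (∀ n : ℕ, S n = 1 ↔ Algebra.trace K L ((u : L) ^ n) ∈ sqSet K) := by
  classical
  obtain ⟨hm, hm1⟩ := wx_neg_one hL hq1 h hh u hu
  have ho := wx_card_units hL u hu
  have hinj : Function.Injective (algebraMap K L) := (algebraMap K L).injective
  have hchar : ringChar K ≠ 2 := by
    intro h2
    have := FiniteField.even_card_of_char_two h2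
    omega
  obtain ⟨γ, hγ⟩ : ∃ γ : K, algebraMap K L γ = (u : L) ^ (q + 1) :=
    ⟨Algebra.norm K (u : L), by rw [(wx_trace hK hL _).2, pow_succ']⟩
  have hγ0 : γ ≠ 0 := by
    rintro rfl
    rw [map_zero] at hγ
    exact pow_ne_zero _ u.ne_zero hγ.symm
  have hγs : quadraticChar K γ = -1 := by
    rw [quadraticChar_neg_one_iff_not_isSquare]
    rintro ⟨z, rfl⟩
    have hz : z ≠ 0 := by rintro rfl; simp at hγ0
    have h1 := FiniteField.pow_card_sub_one_eq_one z hz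
    rw [hK] at h1
    obtain ⟨m, rfl⟩ : ∃ m, q = 2 * m + 1 := ⟨h - 1, by omega⟩
    have h2 : (z * z) ^ m = 1 := by
      rw [← h1, ← pow_two, ← pow_mul]; rfl
    apply hm1
    ext
    have h3 := congrArg (algebraMap K L) h2
    rw [map_pow, hγ, map_one, ← pow_mul] at h3
    rw [Units.val_pow_eq_pow_val, Units.val_one, ← h3]
    congr 1
    rw [← hh, Nat.add_sub_cancel]; ring
  set F : ℤ → K := fun n => Algebra.trace K L ((u ^ n : Lˣ) : L) with hF
  have hFn : ∀ n, algebraMap K L (F n) = ((u ^ n : Lˣ) : L) + ((u ^ (n * q) : Lˣ) : L) := by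
    intro n
    rw [hF, (wx_trace hK hL _).1, zpow_mul, zpow_natCast, Units.val_pow_eq_pow_val (u ^ n)]
  have hmz : u ^ ((h : ℤ) * q) = - u ^ (h : ℤ) := by
    have : (h : ℤ) * q = ((h * (q - 1) : ℕ) : ℤ) + h := by
      push_cast [Nat.cast_sub hq1.le]; ring
    rw [this, zpow_add, zpow_natCast, hm]; simp
  have h0 : ∀ n, F n = 0 ↔ ((q + 1 : ℕ) : ℤ) ∣ n - h := by
    intro n
    have e1 : F n = 0 ↔ u ^ n = - u ^ (n * q) := by
      rw [← hinj.eq_iff, map_zero, hFn, add_eq_zero_iff_eq_neg, ← Units.val_neg, Units.val_inj]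
    have e2 : u ^ n = - u ^ (n * q) ↔ u ^ ((n - h) * ((q : ℤ) - 1)) = 1 := by
      have : (n - h) * ((q : ℤ) - 1) = (n * q - n) - (h * q - h) := by ring
      rw [this, zpow_sub, zpow_sub, zpow_sub _ ((h : ℤ) * q), hmz]
      simp only [neg_mul, mul_inv_cancel, inv_neg, inv_one, mul_neg, mul_one]
      rw [neg_eq_iff_eq_neg, mul_inv_eq_iff_eq_mul, neg_one_mul, eq_comm, neg_eq_iff_eq_neg]
    have e3 : ((q ^ 2 - 1 : ℕ) : ℤ) = ((q + 1 : ℕ) : ℤ) * ((q : ℤ) - 1) := by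
      rw [Nat.cast_sub (Nat.one_le_pow _ _ (by omega))]; push_cast; ring
    rw [e1, e2, ← orderOf_dvd_iff_zpow_eq_one, ho, e3]
    exact mul_dvd_mul_iff_right (by omega)
  have hFS : ∀ n, F (n + (q + 1)) = γ * F n := by
    intro n
    have : ((u ^ (n + (q + 1)) : Lˣ) : L) = γ • ((u ^ n : Lˣ) : L) := by
      rw [Algebra.smul_def, hγ, zpow_add, mul_comm, Units.val_mul]
      congr 1
    simp only [hF]
    rw [this, map_smul, smul_eq_mul]
  have hFc : γ ^ c * F (h - c) = (-1) * F (h + c) := by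
    apply hinj
    rw [map_mul, map_mul, map_pow, hγ, hFn, hFn, map_neg, map_one, sub_mul, add_mul, zpow_sub,
      zpow_sub, zpow_add, zpow_add, hmz]
    have e : ((u : L) ^ (q + 1)) ^ c = ((u ^ (c : ℤ) : Lˣ) : L) * ((u ^ ((c : ℤ) * q) : Lˣ) : L) := by
      rw [← Units.val_mul, ← zpow_add, ← Units.val_pow_eq_pow_val, ← Units.val_pow_eq_pow_val,
        ← pow_mul, ← zpow_natCast]
      congr 2
      push_cast; ring
    rw [e]
    have n1 := (u ^ (c : ℤ)).ne_zero
    have n2 := (u ^ ((c : ℤ) * q)).ne_zero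
    simp only [Units.val_mul, Units.val_neg, Units.val_inv_eq_inv_val]
    field_simp
    ring
  have hFc' : - quadraticChar K (F (h - c)) =
      quadraticChar K (-1) * quadraticChar K (F (h + c)) := by
    have := congrArg (quadraticChar K) hFc
    rw [map_mul, map_mul, map_pow, hγs, hc.neg_one_pow, neg_one_mul] at this
    exact this
  rw [quadraticChar_neg_one hchar, hK] at hFc'
  refine ⟨fun n => quadraticChar K (F n), ?_, ?_, ?_, ?_, ?_, ?_, ?_⟩
  · intro n
    simp only [hFS, map_mul, hγs, neg_one_mul]
  · intro n
    simp only [quadraticChar_eq_zero_iff, h0]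
  · intro n
    by_cases hn : F n = 0
    · left; simp only [hn, quadraticChar_zero]
    · right; exact quadraticChar_dichotomy hn
  · intro h3
    rw [ZMod.χ₄_nat_three_mod_four h3] at hFc'
    show quadraticChar K (F (h - c)) = quadraticChar K (F (h + c))
    linarith
  · intro h3
    rw [ZMod.χ₄_nat_one_mod_four h3] at hFc'
    show quadraticChar K (F (h - c)) = - quadraticChar K (F (h + c))
    linarith
  · intro n
    simp only [quadraticChar_eq_zero_iff, hF, zpow_natCast, Units.val_pow_eq_pow_val]
  · intro n
    have e : Algebra.trace K L ((u : L) ^ n) = F n := by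
      simp only [hF, zpow_natCast, Units.val_pow_eq_pow_val]
    rw [e]
    show quadraticChar K (F n) = 1 ↔ _
    by_cases hn : F n = 0
    · rw [hn, quadraticChar_zero]
      constructor
      · intro h; norm_num at h
      · rintro ⟨z, hz, h⟩
        exact absurd h.symm (pow_ne_zero _ hz)
    · rw [quadraticChar_one_iff_isSquare hn]
      constructor
      · rintro ⟨z, hz⟩
        exact ⟨z, by rintro rfl; simp at hz; exact hn hz, by rw [hz, pow_two]⟩
      · rintro ⟨z, hz, h⟩
        exact ⟨z, by rw [h, pow_two]⟩

/-- Lemma A.1: the form of `X_{1,c}`. -/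
theorem wilson_xiang_X1c_form
    (p s q : ℕ) (hp : p.Prime) (hpodd : p ≠ 2) (hs : 0 < s) (hq : q = p ^ s)
    (K L : Type) [Field K] [Fintype K] [Field L] [Fintype L] [Algebra K L]
    (hK : Fintype.card K = q) (hL : Fintype.card L = q ^ 2)
    (ω : L) (hω : IsPrim L ω)
    (c : ℕ) (hc : c < 2 * q + 2) (hcodd : Odd c)
    (I₁ I₂ J₁ J₂ : Set (ZMod (2 * (q + 1))))
    (hI₁ : I₁ = {i | Algebra.trace K L (ω ^ i.val) = 0})
    (hI₂ : I₂ = {i | Algebra.trace K L (ω ^ i.val) ∈ sqSet K})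
    (hJ₁ : J₁ = {i | i + (c : ZMod (2 * (q + 1))) ∈ I₁})
    (hJ₂ : J₂ = {i | i + (c : ZMod (2 * (q + 1))) ∈ I₂})
    (X₁c : Set (ZMod (2 * (q + 1))))
    (hX₁c : X₁c = (I₁ ∩ J₂) ∪ (I₂ ∩ J₁)) :
    ∃ ε δ : ℤ,
      X₁c = {(((q + 1) / 2 : ℕ) : ZMod (2 * (q + 1))) * (ε : ZMod (2 * (q + 1))),
        (((q + 1) / 2 : ℕ) : ZMod (2 * (q + 1))) * (δ : ZMod (2 * (q + 1)))
          - (c : ZMod (2 * (q + 1)))} ∧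
      (q % 4 = 3 → (ε = 1 ∧ δ = 1) ∨ (ε = -1 ∧ δ = -1)) ∧
      (q % 4 = 1 → (ε = -1 ∧ δ = 1) ∨ (ε = 1 ∧ δ = -1)) := by
  have hpo : Odd p := hp.odd_of_ne_two hpodd
  have hqo : Odd q := hq ▸ hpo.pow
  have hq1 : 1 < q := by rw [hq]; exact Nat.one_lt_pow hs.ne' hp.one_lt
  obtain ⟨h, hh⟩ : ∃ h, 2 * h = q + 1 := by
    obtain ⟨m, rfl⟩ := hqo
    exact ⟨m + 1, by ring⟩
  have hω0 : ω ≠ 0 := by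
    rintro rfl
    have : Fintype.card L ≤ 2 := by
      classical
      have : (Finset.univ : Finset L) ⊆ {0, 1} := by
        intro x _
        by_cases hx : x = 0
        · simp [hx]
        · obtain ⟨n, hn⟩ := hω x hx
          rcases Nat.eq_zero_or_pos n with rfl | h'
          · simp [hn]
          · rw [zero_pow h'.ne'] at hn; exact absurd hn hx
      exact (Finset.card_le_card this).trans Finset.card_le_two
    nlinarith
  obtain ⟨S, hS1, hS0, hS3, hSa, hSb, hSt, hSs⟩ :=
    wx_key hK hL hq1 h hh (Units.mk0 ω hω0) hω c hcodd
  simp only [Units.val_mk0] at hSt hSs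
  have hdiv : (q + 1) / 2 = h := by omega
  rw [hdiv]
  have : NeZero (2 * (q + 1)) := ⟨by omega⟩
  have hper : Function.Periodic S (((2 * (q + 1) : ℕ)) : ℤ) := by
    intro n
    have : n + ((2 * (q + 1) : ℕ) : ℤ) = n + (q + 1) + (q + 1) := by push_cast; ring
    rw [this, hS1, hS1, neg_neg]
  set σ : ZMod (2 * (q + 1)) → ℤ := fun i => S (i.val : ℤ) with hσ
  have hσS : ∀ n : ℤ, σ (n : ZMod (2 * (q + 1))) = S n := by
    intro n
    simp only [hσ]
    rw [ZMod.val_intCast]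
    have := hper.int_mul (n / ((2 * (q + 1) : ℕ) : ℤ)) (n % ((2 * (q + 1) : ℕ) : ℤ))
    rw [← this]
    congr 1
    have h2 := Int.emod_add_mul_ediv n ((2 * (q + 1) : ℕ) : ℤ)
    rw [mul_comm (((2 * (q + 1) : ℕ)) : ℤ) (n / _)] at h2
    exact h2
  have hM : ((h : ℤ) : ZMod (2 * (q + 1))) + h + h + h = 0 := by
    have : ((2 * (q + 1) : ℕ) : ZMod (2 * (q + 1))) = 0 := ZMod.natCast_self _
    have h2 : 2 * (q + 1) = h + h + h + h := by omega
    have h3 : ((h + h + h + h : ℕ) : ZMod (2 * (q + 1))) = 0 :=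
      (congrArg (Nat.cast : ℕ → ZMod (2 * (q + 1))) h2).symm.trans this
    push_cast at h3 ⊢
    exact h3
  have hσ0 : ∀ i, σ i = 0 ↔ (i = (h : ZMod (2 * (q + 1))) ∨ i = -(h : ZMod (2 * (q + 1)))) := by
    intro i
    constructor
    · intro hi
      have h1 := (hS0 _).1 hi
      have hlt := ZMod.val_lt i
      obtain ⟨k, hk⟩ := h1
      have hk' : (i.val : ℤ) = h + 2 * h * k := by
        have h2 : ((q + 1 : ℕ) : ℤ) = 2 * h := by omega
        rw [h2] at hk; linarith
      have hk0 : 0 ≤ k := by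
        by_contra hneg
        have : k ≤ -1 := by omega
        nlinarith
      have hk1 : k < 2 := by
        by_contra hneg
        have : 2 ≤ k := by omega
        have : (i.val : ℤ) < 4 * h := by omega
        nlinarith
      rw [← ZMod.natCast_zmod_val i]
      rcases (by omega : k = 0 ∨ k = 1) with rfl | rfl
      · left
        congr 1; omega
      · right
        have : i.val = h + h + h := by omega
        rw [this]
        push_cast at hM ⊢
        linear_combination hM
    · rintro (rfl | rfl)
      · have := hσS h
        push_cast at this
        rw [this, hS0]; simp
      · have := hσS (-h)
        push_cast at this
        rw [this, hS0]
        exact ⟨-1, by push_cast; omega⟩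
  have hI1 : ∀ i, i ∈ I₁ ↔ (i = (h : ZMod (2 * (q + 1))) ∨ i = -(h : ZMod (2 * (q + 1)))) := by
    intro i
    rw [← hσ0, hI₁, Set.mem_ofPred_eq, ← hSt]
  have hI2 : ∀ i, i ∈ I₂ ↔ σ i = 1 := by
    intro i
    rw [hI₂, Set.mem_ofPred_eq, ← hSs]
  have v1 : σ ((h : ZMod (2 * (q + 1))) + c) = S (h + c) := by
    rw [← hσS]; push_cast; rfl
  have v2 : σ (-(h : ZMod (2 * (q + 1))) + c) = - S (h + c) := by
    have : (h : ℤ) + c = (-h + c) + (q + 1) := by omega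
    rw [this, hS1, neg_neg, ← hσS]; push_cast; rfl
  have v3 : σ ((h : ZMod (2 * (q + 1))) - c) = S (h - c) := by
    rw [← hσS]; push_cast; rfl
  have v4 : σ (-(h : ZMod (2 * (q + 1))) - c) = - S (h - c) := by
    have : (h : ℤ) - c = (-h - c) + (q + 1) := by omega
    rw [this, hS1, neg_neg, ← hσS]; push_cast; rfl
  have hne : S (h + c) ≠ 0 := by
    intro h1
    have h2 := (hS0 _).1 h1
    have h3 : (2 : ℤ) ∣ (c : ℤ) := by
      have : (2 : ℤ) ∣ ((q + 1 : ℕ) : ℤ) := ⟨h, by rw [← hh]; push_cast; ring⟩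
      refine this.trans ?_
      rwa [add_sub_cancel_left] at h2
    obtain ⟨m, hm⟩ := hcodd
    omega
  have hX : ∀ i, i ∈ X₁c ↔ (((i = (h : ZMod (2 * (q + 1))) ∨ i = -(h : ZMod (2 * (q + 1)))) ∧
      σ (i + c) = 1) ∨ (σ i = 1 ∧ (i = (h : ZMod (2 * (q + 1))) - c ∨
        i = -(h : ZMod (2 * (q + 1))) - c))) := by
    intro i
    rw [hX₁c, hJ₁, hJ₂]
    simp only [Set.mem_union, Set.mem_inter_iff, Set.mem_ofPred_eq, hI1, hI2, eq_sub_iff_add_eq]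
  have fin : ∀ a b : ℤ, (a = 1 ∨ a = -1) → (b = 1 ∨ b = -1) → S (h + c) = a → S (h - c) = b →
      X₁c = {(h : ZMod (2 * (q + 1))) * (a : ZMod (2 * (q + 1))),
        (h : ZMod (2 * (q + 1))) * (b : ZMod (2 * (q + 1))) - (c : ZMod (2 * (q + 1)))} := by
    intro a b ha hb hSa hSb
    rw [hSa] at v1 v2
    rw [hSb] at v3 v4
    ext i
    rw [hX, Set.mem_insert_iff, Set.mem_singleton_iff]
    constructor
    · rintro (⟨rfl | rfl, h2⟩ | ⟨h2, rfl | rfl⟩)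
      · left; rw [v1] at h2; simp [h2]
      · left; rw [v2] at h2; rw [show a = -1 by omega]; simp
      · right; rw [v3] at h2; simp [h2]
      · right; rw [v4] at h2; rw [show b = -1 by omega]; simp
    · rintro (h2 | h2)
      · left
        rcases ha with rfl | rfl
        · simp only [Int.cast_one, mul_one] at h2
          exact ⟨Or.inl h2, by rw [h2, v1]⟩
        · simp only [Int.cast_neg, Int.cast_one, mul_neg, mul_one] at h2
          exact ⟨Or.inr h2, by rw [h2, v2]; rfl⟩
      · right
        rcases hb with rfl | rfl
        · simp only [Int.cast_one, mul_one] at h2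
          exact ⟨by rw [h2, v3], Or.inl h2⟩
        · simp only [Int.cast_neg, Int.cast_one, mul_neg, mul_one] at h2
          exact ⟨by rw [h2, v4]; rfl, Or.inr h2⟩
  have ha : S (h + c) = 1 ∨ S (h + c) = -1 := (hS3 _).resolve_left hne
  have hb : S (h - c) = 1 ∨ S (h - c) = -1 := by
    obtain ⟨m, hm⟩ := hqo
    rcases (by omega : q % 4 = 1 ∨ q % 4 = 3) with h4 | h4
    · rw [hSb h4]; omega
    · rw [hSa h4]; exact ha
  refine ⟨S (h + c), S (h - c), fin _ _ ha hb rfl rfl, ?_, ?_⟩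
  · intro h4
    have := hSa h4
    omega
  · intro h4
    have := hSb h4
    omega

end
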